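/- Let κ > 1, let r ≥ 4κ, and let x ∈ X satisfy r/(2κ) ≤ |x| < r/2. Then B̂(x, d̂(x)/3) ⊂ B(a,r) \ B(a, r/(4κ)) ⊂ B̂(∞, 4κ/(1+r)) \ B̂(∞, 1/(1+r)), where B(a,ρ) ⊂ X is regarded as a subset of X̂. -/

import Mathlib

open Metric Set MeasureTheory Filter
open scoped ENNReal NNReal

noncomputable section

variable {X : Type*}

/-- The quasimetric `d_a` on the sphericalization `X̂ = X ∪ {∞}`, with `none` playing
the role of the point `∞`. -/
noncomputable def sphDist [MetricSpace X] (a : X) : Option X → Option X → ℝ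
  | some x, some y => dist x y / ((1 + dist x a) * (1 + dist y a))
  | some x, none => 1 / (1 + dist x a)
  | none, some y => 1 / (1 + dist y a)
  | none, none => 0

/-- The sum `Σ_{j=1}^k d_a(x_{j-1}, x_j)` along a finite sequence (list) in `X̂`. -/
noncomputable def chainSum [MetricSpace X] (a : X) : List (Option X) → ℝ
  | [] => 0
  | [_] => 0
  | x :: y :: l => sphDist a x y + chainSum a (y :: l)

/-- The sphericalized distance `d̂(x,y) = inf Σ_{j=1}^k d_a(x_{j-1},x_j)`, the infimum
being taken over all finite sequences `x = x_0, x_1, …, x_k = y` in `X̂`. -/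
noncomputable def sphHatDist [MetricSpace X] (a : X) (x y : Option X) : ℝ :=
  sInf {s : ℝ | ∃ L : List (Option X),
    L.head? = some x ∧ L.getLast? = some y ∧ chainSum a L = s}

/-- `d̂(x) = d̂(x,∞) = 1/(1+|x|)` for `x ∈ X`. -/
noncomputable def sphD [MetricSpace X] (a x : X) : ℝ := 1 / (1 + dist x a)

/-!
A step of a chain changes `d_a(·, ∞)` by at most its length: two points of `X` satisfy
`|1 / (1 + |x|) - 1 / (1 + |y|)| ≤ d_a(x, y)` by the triangle inequality. Hence
`d̂(·, ∞) = d_a(·, ∞)`, and annuli about `a` are exactly the sets of points whose `d̂`-distance to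
`∞` lies in a half-open interval. On `B̂(x, d̂(x) / 3)` the distance to `∞` stays strictly between
`2 d̂(x) / 3` and `4 d̂(x) / 3`, so both inclusions reduce to comparing intervals.
-/

section Sphericalization

variable [MetricSpace X]

theorem sphD_pos (a x : X) : 0 < sphD a x := by
  unfold sphD
  positivity

theorem abs_sphD_sub_sphD_le (a x y : X) :
    |sphD a x - sphD a y| ≤ dist x y / ((1 + dist x a) * (1 + dist y a)) := by
  have hsub : sphD a x - sphD a y =
      (dist y a - dist x a) / ((1 + dist x a) * (1 + dist y a)) := by
    unfold sphD
    field_simp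
    ring
  rw [hsub, abs_div, abs_of_pos (by positivity : 0 < (1 + dist x a) * (1 + dist y a)),
    dist_comm x y]
  gcongr
  exact abs_dist_sub_le y x a

theorem abs_sphDist_none_sub_le_sphDist (a : X) (x y : Option X) :
    |sphDist a none x - sphDist a none y| ≤ sphDist a x y := by
  rcases x with _ | x <;> rcases y with _ | y
  · simp [sphDist]
  · simpa [sphDist, sphD] using (abs_of_pos (sphD_pos a y)).le
  · simpa [sphDist, sphD] using (abs_of_pos (sphD_pos a x)).le
  · exact abs_sphD_sub_sphD_le a x y

theorem abs_sphDist_none_sub_le_chainSum (a : X) {L : List (Option X)} {x y : Option X}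
    (hx : L.head? = some x) (hy : L.getLast? = some y) :
    |sphDist a none x - sphDist a none y| ≤ chainSum a L := by
  induction L generalizing x with
  | nil => simp at hx
  | cons z L ih =>
    obtain rfl : z = x := by simpa using hx
    cases L with
    | nil =>
      obtain rfl : z = y := by simpa using hy
      simp [chainSum]
    | cons w L =>
      calc |sphDist a none z - sphDist a none y|
          ≤ |sphDist a none z - sphDist a none w| + |sphDist a none w - sphDist a none y| :=
            abs_sub_le _ _ _
        _ ≤ sphDist a z w + chainSum a (w :: L) :=
            add_le_add (abs_sphDist_none_sub_le_sphDist a z w) (ih rfl (by simpa using hy))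

theorem abs_sphDist_none_sub_le_sphHatDist (a : X) (x y : Option X) :
    |sphDist a none x - sphDist a none y| ≤ sphHatDist a x y := by
  refine le_csInf ⟨_, [x, y], rfl, rfl, rfl⟩ ?_
  rintro _ ⟨L, hx, hy, rfl⟩
  exact abs_sphDist_none_sub_le_chainSum a hx hy

theorem sphHatDist_le_sphDist (a : X) (x y : Option X) :
    sphHatDist a x y ≤ sphDist a x y := by
  refine csInf_le ⟨0, ?_⟩ ⟨[x, y], rfl, rfl, by simp [chainSum]⟩
  rintro _ ⟨L, hx, hy, rfl⟩
  exact (abs_nonneg _).trans (abs_sphDist_none_sub_le_chainSum a hx hy)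

theorem sphHatDist_none_left (a : X) (y : Option X) :
    sphHatDist a none y = sphDist a none y := by
  refine le_antisymm (sphHatDist_le_sphDist a none y) ?_
  calc sphDist a none y ≤ |sphDist a none none - sphDist a none y| := by
        simpa [sphDist] using le_abs_self (sphDist a none y)
    _ ≤ sphHatDist a none y := abs_sphDist_none_sub_le_sphHatDist a none y

theorem sphHatDist_none_none (a : X) : sphHatDist a none none = 0 :=
  sphHatDist_none_left a none

theorem sphHatDist_none_some (a x : X) : sphHatDist a none (some x) = sphD a x :=
  sphHatDist_none_left a (some x)

theorem abs_sphHatDist_none_sub_le (a : X) (x y : Option X) :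
    |sphHatDist a none x - sphHatDist a none y| ≤ sphHatDist a x y := by
  simpa only [sphHatDist_none_left] using abs_sphDist_none_sub_le_sphHatDist a x y

theorem image_some_ball_diff_ball (a : X) {ρ r : ℝ} (hρ : -1 < ρ) (hr : -1 < r) :
    Option.some '' (ball a r \ ball a ρ) =
      sphHatDist a none ⁻¹' Ioc (1 / (1 + r)) (1 / (1 + ρ)) := by
  have hρ' : 0 < 1 + ρ := by linarith
  have hr' : 0 < 1 + r := by linarith
  ext y
  rcases y with _ | y
  · simp [sphHatDist_none_none, hr'.not_gt]
  · have hy : 0 < 1 + dist y a := by positivity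
    rw [(Option.some_injective X).mem_set_image, mem_preimage, sphHatDist_none_some, mem_Ioc, sphD,
      one_div_lt_one_div hr' hy, one_div_le_one_div hy hρ', add_lt_add_iff_left,
      add_le_add_iff_left, Set.mem_sdiff, mem_ball, mem_ball, not_lt]

theorem sphHatBall_subset_image_annulus {a x : X} {c r : ℝ} (hc : 0 < c) (hcr : c ≤ 2 * r)
    (hr : 2 ≤ r) (hcx : 2 * (r / c) ≤ dist x a) (hxr : dist x a ≤ r / 2) :
    {y : Option X | sphHatDist a (some x) y < sphD a x / 3} ⊆
      Option.some '' (ball a r \ ball a (r / c)) := by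
  have hrc : 1 / 2 ≤ r / c := (le_div_iff₀ hc).2 (by linarith)
  have hlower : 1 / (1 + r) ≤ 2 / 3 * sphD a x := by
    rw [sphD, div_mul_div_comm, div_le_div_iff₀ (by positivity) (by positivity)]
    linarith
  have hupper : 4 / 3 * sphD a x ≤ 1 / (1 + r / c) := by
    rw [sphD, div_mul_div_comm, div_le_div_iff₀ (by positivity) (by positivity)]
    linarith
  rw [image_some_ball_diff_ball a (by linarith) (by linarith)]
  intro y hy
  have hlt := (abs_sphHatDist_none_sub_le a (some x) y).trans_lt hy
  rw [sphHatDist_none_some, abs_lt] at hlt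
  constructor <;> linarith

theorem image_annulus_subset_sphHatBall_diff (a : X) {c r : ℝ} (hc : 1 < c) (hr : 0 ≤ r) :
    Option.some '' (ball a r \ ball a (r / c)) ⊆
      {y : Option X | sphHatDist a none y < c / (1 + r)} \
        {y : Option X | sphHatDist a none y < 1 / (1 + r)} := by
  have hrc : 0 ≤ r / c := by positivity
  have hradius : 1 / (1 + r / c) < c / (1 + r) := by
    have hcancel : c * (r / c) = r := mul_div_cancel₀ r (by positivity)
    rw [div_lt_div_iff₀ (by positivity) (by positivity)]
    linarith
  rw [image_some_ball_diff_ball a (by linarith) (by linarith)]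
  exact fun y hy => ⟨hy.2.trans_lt hradius, not_lt.2 hy.1.le⟩

theorem statement18_general (a : X) {κ r : ℝ} (hκ : 1 ≤ κ) (hr : 2 * κ ≤ r)
    {x : X} (h1 : r / (2 * κ) ≤ dist x a) (h2 : dist x a ≤ r / 2) :
    {y : Option X | sphHatDist a (some x) y < sphD a x / 3} ⊆
      Option.some '' (ball a r \ ball a (r / (4 * κ))) ∧
    Option.some '' (ball a r \ ball a (r / (4 * κ))) ⊆
      {y : Option X | sphHatDist a none y < 4 * κ / (1 + r)} \
        {y : Option X | sphHatDist a none y < 1 / (1 + r)} := by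
  have hhalf : 2 * (r / (4 * κ)) = r / (2 * κ) := by
    field_simp
    ring
  exact ⟨sphHatBall_subset_image_annulus (by linarith) (by linarith) (by linarith)
      (hhalf.trans_le h1) h2,
    image_annulus_subset_sphHatBall_diff a (by linarith) (by linarith)⟩

end Sphericalization

/-- Let `κ > 1`, `r ≥ 4κ` and `x ∈ X` with `r/(2κ) ≤ |x| < r/2`.
Then `B̂(x, d̂(x)/3) ⊂ B(a,r) \ B(a, r/(4κ)) ⊂ B̂(∞, 4κ/(1+r)) \ B̂(∞, 1/(1+r))`,
where `B(a,ρ) ⊂ X` is regarded as a subset of `X̂`. -/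
theorem statement18 [MetricSpace X]
    (hX : ¬ Bornology.IsBounded (Set.univ : Set X)) (a : X)
    (κ r : ℝ) (hκ : 1 < κ) (hr : 4 * κ ≤ r)
    (x : X) (h1 : r / (2 * κ) ≤ dist x a) (h2 : dist x a < r / 2) :
    {y : Option X | sphHatDist a (some x) y < sphD a x / 3} ⊆
      Option.some '' (Metric.ball a r \ Metric.ball a (r / (4 * κ))) ∧
    Option.some '' (Metric.ball a r \ Metric.ball a (r / (4 * κ))) ⊆
      {y : Option X | sphHatDist a none y < 4 * κ / (1 + r)} \
        {y : Option X | sphHatDist a none y < 1 / (1 + r)} := by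
  exact statement18_general a hκ.le (by linarith) h1 h2.le
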